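/- arXiv:2002.04771 — 3 statements merged into one kernel-verified Lean document; each statement's English description precedes it below -/
import Mathlib

section
/- If G is algebraically finite and ac(∅) = ∅ (equivalently, every orbit of G on U is infinite), then there exist two copies C and D for G with C ∩ D = ∅. -/
/-- `f` is adherent to the subgroup `G` of permutations of `U`:
for every finite set `F` there is `g ∈ G` agreeing with `f` on `F`. -/
def IsAdherent {U : Type*} (G : Subgroup (Equiv.Perm U)) (f : U → U) : Prop :=
  ∀ F : Finset U, ∃ g ∈ G, ∀ x ∈ F, f x = g x

/-- `C` is a copy for the group `G`: the range of a function adherent to `G`. -/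
def IsCopy {U : Type*} (G : Subgroup (Equiv.Perm U)) (C : Set U) : Prop :=
  ∃ f : U → U, IsAdherent G f ∧ Set.range f = C

/-- The algebraic closure of `F`: the union of all finite orbits of the pointwise
stabilizer of `F`, i.e. the set of points whose orbit under that stabilizer is finite. -/
def algCl {U : Type*} (G : Subgroup (Equiv.Perm U)) (F : Set U) : Set U :=
  {x | Set.Finite {y | ∃ g ∈ G, (∀ a ∈ F, g a = a) ∧ g x = y}}

/-- `G` is algebraically finite: the algebraic closure of every finite set is finite. -/
def AlgebraicallyFinite {U : Type*} (G : Subgroup (Equiv.Perm U)) : Prop :=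
  ∀ F : Finset U, (algCl G ↑F).Finite

open scoped Pointwise in
theorem neumann_sep {U K : Type*} [Group K] [MulAction K U] (A B : Finset U)
    (h : ∀ a ∈ A, (MulAction.orbit K a).Infinite) : ∃ k : K, ∀ a ∈ A, k • a ∉ B := by
  classical
  by_contra! hc
  let s : Finset (U × U) := (A ×ˢ B).filter (fun p => ∃ k : K, k • p.1 = p.2)
  let g : U × U → K := fun p => if hp : ∃ k : K, k • p.1 = p.2 then hp.choose else 1
  have hg : ∀ p : U × U, (∃ k : K, k • p.1 = p.2) → g p • p.1 = p.2 := by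
    intro p hp
    simp only [g, dif_pos hp]
    exact hp.choose_spec
  have hcov : ⋃ p ∈ s, g p • ((MulAction.stabilizer K p.1 : Subgroup K) : Set K) = Set.univ := by
    rw [Set.eq_univ_iff_forall]
    intro k
    obtain ⟨a, ha, hb⟩ := hc k
    have hs : (a, k • a) ∈ s := by
      simp only [s, Finset.mem_filter, Finset.mem_product]
      exact ⟨⟨ha, hb⟩, k, rfl⟩
    refine Set.mem_biUnion hs ?_
    rw [mem_leftCoset_iff, SetLike.mem_coe, MulAction.mem_stabilizer_iff, mul_smul,
      inv_smul_eq_iff]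
    exact (hg (a, k • a) ⟨k, rfl⟩).symm
  obtain ⟨p, hp, hfi⟩ := Subgroup.exists_finiteIndex_of_leftCoset_cover hcov
  have hpA : p.1 ∈ A := by
    simp only [s, Finset.mem_filter, Finset.mem_product] at hp
    exact hp.1.1
  apply h _ hpA
  have := Subgroup.finiteIndex_iff_finite_quotient.mp hfi
  have hf : Finite (MulAction.orbit K p.1) :=
    Finite.of_equiv _ (MulAction.orbitEquivQuotientStabilizer K p.1).symm
  exact Set.toFinite _

/-- pointwise stabilizer -/
def ptStab {U : Type*} (G : Subgroup (Equiv.Perm U)) (F : Set U) : Subgroup (Equiv.Perm U) where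
  carrier := {g | g ∈ G ∧ ∀ a ∈ F, g a = a}
  one_mem' := ⟨G.one_mem, fun _ _ => rfl⟩
  mul_mem' := by
    rintro a b ⟨ha, ha'⟩ ⟨hb, hb'⟩
    refine ⟨G.mul_mem ha hb, fun x hx => ?_⟩
    rw [Equiv.Perm.mul_apply, hb' x hx, ha' x hx]
  inv_mem' := by
    rintro a ⟨ha, ha'⟩
    refine ⟨G.inv_mem ha, fun x hx => ?_⟩
    rw [Equiv.Perm.inv_eq_iff_eq, ha' x hx]

theorem orbit_ptStab {U : Type*} (G : Subgroup (Equiv.Perm U)) (F : Set U) (x : U) :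
    MulAction.orbit (ptStab G F) x = {y | ∃ g ∈ G, (∀ a ∈ F, g a = a) ∧ g x = y} := by
  ext y
  constructor
  · rintro ⟨⟨k, hk, hk'⟩, rfl⟩
    exact ⟨k, hk, hk', rfl⟩
  · rintro ⟨k, hk, hk', rfl⟩
    exact ⟨⟨k, hk, hk'⟩, rfl⟩

theorem mem_algCl_iff {U : Type*} (G : Subgroup (Equiv.Perm U)) (F : Set U) (x : U) :
    x ∈ algCl G F ↔ (MulAction.orbit (ptStab G F) x).Finite := by
  rw [orbit_ptStab]; rfl

theorem subset_algCl {U : Type*} (G : Subgroup (Equiv.Perm U)) (F : Set U) : F ⊆ algCl G F := by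
  intro x hx
  refine (Set.finite_singleton x).subset ?_
  rintro y ⟨g, _, hg, rfl⟩
  exact hg x hx

theorem algCl_idem {U : Type*} (G : Subgroup (Equiv.Perm U)) (F : Set U)
    (hfin : (algCl G F).Finite) : algCl G (algCl G F) ⊆ algCl G F := by
  classical
  intro x hx
  have hA : Finite (algCl G F) := hfin
  have hinv : ∀ k : ptStab G F, ∀ a ∈ algCl G F, k • a ∈ algCl G F := by
    intro k a ha
    rw [mem_algCl_iff] at ha ⊢
    rwa [MulAction.orbit_smul]
  let r : ptStab G F → (algCl G F → algCl G F) := fun k a => ⟨k • a.1, hinv k a.1 a.2⟩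
  rw [mem_algCl_iff] at hx ⊢
  have hfr : (Set.range r).Finite := Set.toFinite _
  choose! t ht using (fun (φ : algCl G F → algCl G F) (h : φ ∈ Set.range r) => h)
  refine (hfr.biUnion (t := fun φ => (fun y => t φ • y) ''
    (MulAction.orbit (ptStab G (algCl G F)) x)) (fun φ _ => hx.image _)).subset ?_
  rintro y ⟨k, rfl⟩
  refine Set.mem_biUnion (Set.mem_range_self k) ?_
  have h1 := ht (r k) (Set.mem_range_self k)
  have h2 : ((t (r k))⁻¹ * k : ptStab G F).1 ∈ ptStab G (algCl G F) := by
    refine ⟨((t (r k))⁻¹ * k : ptStab G F).2.1, fun a ha => ?_⟩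
    have h3 : t (r k) • a = k • a := congrArg Subtype.val (congrFun h1 ⟨a, ha⟩)
    change ((t (r k))⁻¹ * k) • a = a
    rw [mul_smul, inv_smul_eq_iff, h3]
  refine ⟨((t (r k))⁻¹ * k) • x, ⟨⟨_, h2⟩, rfl⟩, ?_⟩
  change t (r k) • ((t (r k))⁻¹ * k) • x = k • x
  rw [mul_smul, smul_inv_smul]

theorem move_off {U : Type*} (G : Subgroup (Equiv.Perm U)) (F A B : Finset U)
    (hF : algCl G (F : Set U) ⊆ F) (g : Equiv.Perm U) (hg : g ∈ G) :
    ∃ g' ∈ G, (∀ x ∈ F, g' x = g x) ∧ ∀ x ∈ A, x ∉ F → g' x ∉ B := by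
  classical
  obtain ⟨k, hk⟩ := neumann_sep (K := ptStab G (F : Set U)) (A \ F) (B.image g.symm) (by
    intro a ha hfin
    rw [← mem_algCl_iff] at hfin
    exact (Finset.mem_sdiff.mp ha).2 (hF hfin))
  refine ⟨g * k.1, G.mul_mem hg k.2.1, fun x hx => ?_, fun x hx hxF hB => ?_⟩
  · rw [Equiv.Perm.mul_apply, k.2.2 x hx]
  · apply hk x (Finset.mem_sdiff.mpr ⟨hx, hxF⟩)
    exact Finset.mem_image.mpr ⟨_, hB, by
      rw [Equiv.Perm.mul_apply, Equiv.symm_apply_apply]; rfl⟩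

/-- finite approximation of the pair of adherent maps -/
structure Approx {U : Type*} (G : Subgroup (Equiv.Perm U)) where
  F : Finset U
  g : Equiv.Perm U
  h : Equiv.Perm U
  hF : algCl G (F : Set U) ⊆ F
  hg : g ∈ G
  hh : h ∈ G
  disj : ∀ x ∈ F, ∀ y ∈ F, g x ≠ h y

theorem Approx.step {U : Type*} (G : Subgroup (Equiv.Perm U)) (hG : AlgebraicallyFinite G)
    (P : Approx G) (x : U) : ∃ Q : Approx G, x ∈ Q.F ∧ P.F ⊆ Q.F ∧
      (∀ y ∈ P.F, Q.g y = P.g y) ∧ (∀ y ∈ P.F, Q.h y = P.h y) := by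
  classical
  let F' : Finset U := (hG (insert x P.F)).toFinset
  have hF' : (F' : Set U) = algCl G ((insert x P.F : Finset U) : Set U) := by simp [F']
  have hsub : ∀ y ∈ insert x P.F, y ∈ F' := by
    intro y hy
    rw [← Finset.mem_coe, hF']
    exact subset_algCl G _ hy
  obtain ⟨g', hg', hgF, hgB⟩ := move_off G P.F F' (P.F.image P.h) P.hF P.g P.hg
  obtain ⟨h', hh', hhF, hhB⟩ := move_off G P.F F' (F'.image g') P.hF P.h P.hh
  refine ⟨⟨F', g', h', ?_, hg', hh', ?_⟩, hsub x (by simp), fun y hy => hsub y (by simp [hy]),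
    hgF, hhF⟩
  · rw [hF']
    exact algCl_idem G _ (hG _)
  · intro a ha b hb hab
    by_cases hbF : b ∈ P.F
    · rw [hhF b hbF] at hab
      by_cases haF : a ∈ P.F
      · rw [hgF a haF] at hab
        exact P.disj a haF b hbF hab
      · exact hgB a ha haF (hab ▸ Finset.mem_image_of_mem _ hbF)
    · exact hhB b hb hbF (hab ▸ Finset.mem_image_of_mem _ ha)

/-- Theorem: if `G` is algebraically finite and the algebraic closure of the empty set
is empty (every orbit of `G` is infinite), then there are two disjoint copies for `G`. -/
theorem exists_disjoint_copies {U : Type*} [Countable U] [Infinite U]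
    (G : Subgroup (Equiv.Perm U)) (hG : AlgebraicallyFinite G)
    (h0 : algCl G (∅ : Set U) = ∅) :
    ∃ C D : Set U, IsCopy G C ∧ IsCopy G D ∧ C ∩ D = ∅ := by
  classical
  obtain ⟨e, he⟩ := exists_surjective_nat U
  choose next hx hF hg hh using Approx.step G hG
  let P0 : Approx G := ⟨∅, 1, 1, by simp [h0], G.one_mem, G.one_mem, by simp⟩
  let S : ℕ → Approx G := fun n => Nat.rec P0 (fun n P => next P (e n)) n
  have hS : ∀ n, S (n + 1) = next (S n) (e n) := fun n => rfl
  have hmono : ∀ m n, m ≤ n → (S m).F ⊆ (S n).F ∧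
      (∀ y ∈ (S m).F, (S n).g y = (S m).g y) ∧ (∀ y ∈ (S m).F, (S n).h y = (S m).h y) := by
    intro m n hmn
    induction n, hmn using Nat.le_induction with
    | base => exact ⟨subset_rfl, fun _ _ => rfl, fun _ _ => rfl⟩
    | succ n _ ih =>
      obtain ⟨i1, i2, i3⟩ := ih
      rw [hS]
      refine ⟨i1.trans (hF _ _), fun y hy => ?_, fun y hy => ?_⟩
      · rw [hg _ _ y (i1 hy), i2 y hy]
      · rw [hh _ _ y (i1 hy), i3 y hy]
  choose idx hidx using he
  have hmem : ∀ x, x ∈ (S (idx x + 1)).F := by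
    intro x
    rw [hS]
    simpa only [hidx] using hx (S (idx x)) (e (idx x))
  have hbd : ∀ T : Finset U, ∃ N, ∀ x ∈ T, idx x + 1 ≤ N := fun T =>
    ⟨T.sup (fun x => idx x + 1), fun x hx => Finset.le_sup (f := fun x => idx x + 1) hx⟩
  refine ⟨_, _, ⟨fun x => (S (idx x + 1)).g x, fun T => ?_, rfl⟩,
    ⟨fun x => (S (idx x + 1)).h x, fun T => ?_, rfl⟩, ?_⟩
  · obtain ⟨N, hN⟩ := hbd T
    exact ⟨(S N).g, (S N).hg, fun x hx => ((hmono _ _ (hN x hx)).2.1 x (hmem x)).symm⟩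
  · obtain ⟨N, hN⟩ := hbd T
    exact ⟨(S N).h, (S N).hh, fun x hx => ((hmono _ _ (hN x hx)).2.2 x (hmem x)).symm⟩
  · rw [Set.eq_empty_iff_forall_notMem]
    rintro z ⟨⟨x, hxz⟩, ⟨y, hyz⟩⟩
    obtain ⟨N, hN⟩ := hbd {x, y}
    have hx1 := hmono _ _ (hN x (by simp))
    have hy1 := hmono _ _ (hN y (by simp))
    apply (S N).disj x (hx1.1 (hmem x)) y (hy1.1 (hmem y))
    rw [hx1.2.1 x (hmem x), hy1.2.2 y (hmem y)]
    exact hxz.trans hyz.symm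
end

section
/- Assume that U itself is not the only copy for G. Then for every finite subset F of U and every copy C with F ⊆ C there exists a strictly decreasing ω-sequence C = C₀ ⊋ C₁ ⊋ C₂ ⊋ ⋯ of copies Cᵢ for G such that ⋂_{i∈ω} Cᵢ = ic(F), the intersection of all copies containing F. -/
theorem IsAdherent.inj {U : Type*} {G : Subgroup (Equiv.Perm U)} {f : U → U}
    (hf : IsAdherent G f) : Function.Injective f := by
  classical
  intro x y h
  obtain ⟨g, -, hg⟩ := hf {x, y}
  have hx := hg x (by simp)
  have hy := hg y (by simp)
  exact g.injective (by rw [← hx, ← hy, h])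

theorem IsCopy.image {U : Type*} {G : Subgroup (Equiv.Perm U)} {f : U → U}
    (hf : IsAdherent G f) {D : Set U} (hD : IsCopy G D) : IsCopy G (f '' D) := by
  classical
  obtain ⟨h, hh, rfl⟩ := hD
  refine ⟨f ∘ h, ?_, Set.range_comp f h⟩
  intro S
  obtain ⟨k, hk, hk2⟩ := hh S
  obtain ⟨g, hg, hg2⟩ := hf (S.image h)
  refine ⟨g * k, G.mul_mem hg hk, fun x hx => ?_⟩
  have := hg2 (h x) (Finset.mem_image_of_mem h hx)
  rw [Function.comp_apply, this, hk2 x hx, Equiv.Perm.mul_apply]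

theorem isAdherent_of_mem {U : Type*} {G : Subgroup (Equiv.Perm U)} {g : Equiv.Perm U}
    (hg : g ∈ G) : IsAdherent G g := fun _ => ⟨g, hg, fun _ _ => rfl⟩

/-- Every copy containing `F` properly contains another one. -/
theorem step_strict {U : Type*} (G : Subgroup (Equiv.Perm U))
    (hne : ∃ C : Set U, IsCopy G C ∧ C ≠ Set.univ)
    (F : Finset U) (C : Set U) (hC : IsCopy G C) (hFC : ↑F ⊆ C) :
    ∃ C', IsCopy G C' ∧ ↑F ⊆ C' ∧ C' ⊂ C := by
  classical
  obtain ⟨f, hf, rfl⟩ := hC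
  obtain ⟨D, ⟨h, hh, rfl⟩, hD⟩ := hne
  obtain ⟨z, hz⟩ := (Set.ne_univ_iff_exists_notMem _).1 hD
  obtain ⟨F', hF'⟩ : ∃ F' : Finset U, F'.image f = F := by
    refine ⟨F.preimage f hf.inj.injOn, ?_⟩
    rw [Finset.image_preimage]
    exact Finset.filter_true_of_mem fun x hx => hFC hx
  obtain ⟨k, hk, hk2⟩ := hh F'
  refine ⟨f '' ((k⁻¹ : Equiv.Perm U) '' Set.range h), ?_, ?_, ?_⟩
  · exact IsCopy.image hf (IsCopy.image (isAdherent_of_mem (G.inv_mem hk)) ⟨h, hh, rfl⟩)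
  · intro x hx
    rw [← hF'] at hx
    obtain ⟨y, hy, rfl⟩ := Finset.mem_image.1 (Finset.mem_coe.1 hx)
    exact ⟨y, ⟨h y, ⟨y, rfl⟩, by rw [hk2 y hy]; simp⟩, rfl⟩
  · refine ⟨Set.image_subset_range _ _, fun hs => ?_⟩
    obtain ⟨y, ⟨w, hw, hwy⟩, hy⟩ := hs ⟨(k⁻¹ : Equiv.Perm U) z, rfl⟩
    have h1 := hf.inj hy
    rw [← hwy] at h1
    have h2 := (k⁻¹ : Equiv.Perm U).injective h1
    exact hz (h2 ▸ hw)

theorem step_avoid {U : Type*} (G : Subgroup (Equiv.Perm U))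
    (hne : ∃ C : Set U, IsCopy G C ∧ C ≠ Set.univ)
    (F : Finset U) (C : Set U) (hC : IsCopy G C) (hFC : ↑F ⊆ C) (x : U) :
    ∃ C', IsCopy G C' ∧ ↑F ⊆ C' ∧ C' ⊂ C ∧
      (x ∉ ⋂₀ {D : Set U | IsCopy G D ∧ ↑F ⊆ D} → x ∉ C') := by
  classical
  by_cases hx : x ∈ C ∧ x ∉ ⋂₀ {D : Set U | IsCopy G D ∧ ↑F ⊆ D}
  · obtain ⟨hxC, hx⟩ := hx
    obtain ⟨D, ⟨hD, hFD⟩, hxD⟩ : ∃ D, (IsCopy G D ∧ ↑F ⊆ D) ∧ x ∉ D := by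
      simpa only [Set.mem_sInter, not_forall, exists_prop, Set.mem_ofPred_eq] using hx
    obtain ⟨f, hf, rfl⟩ := hC
    obtain ⟨y, rfl⟩ := hxC
    obtain ⟨g, hg, hg2⟩ := hf (insert y (F.preimage f hf.inj.injOn))
    have hgy : f y = g y := hg2 y (by simp)
    have key : f y ∉ f '' ((g⁻¹ : Equiv.Perm U) '' D) := by
      rintro ⟨w, ⟨d, hd, rfl⟩, hw⟩
      have h1 := hf.inj hw
      apply hxD
      rw [hgy, ← h1]
      simpa using hd
    refine ⟨f '' ((g⁻¹ : Equiv.Perm U) '' D), ?_, ?_, ?_, fun _ => key⟩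
    · exact IsCopy.image hf (IsCopy.image (isAdherent_of_mem (G.inv_mem hg)) hD)
    · intro z hz
      obtain ⟨w, rfl⟩ := hFC hz
      have hw : f w = g w := hg2 w (by simp [Finset.mem_coe.1 hz])
      exact ⟨w, ⟨f w, hFD hz, by rw [hw]; simp⟩, rfl⟩
    · exact ⟨Set.image_subset_range _ _, fun hs => key (hs ⟨y, rfl⟩)⟩
  · obtain ⟨C', h1, h2, h3⟩ := step_strict G hne F C hC hFC
    exact ⟨C', h1, h2, h3, fun h h' => hx ⟨h3.1 h', h⟩⟩

/-- Theorem: if `U` is not the only copy for `G`, then for every finite `F` and every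
copy `C ⊇ F` there is a strictly decreasing sequence of copies starting at `C` whose
intersection is the intersection of all copies containing `F`. -/
theorem exists_decreasing_chain_of_copies {U : Type*} [Countable U] [Infinite U]
    (G : Subgroup (Equiv.Perm U)) (hne : ∃ C : Set U, IsCopy G C ∧ C ≠ Set.univ)
    (F : Finset U) (C : Set U) (hC : IsCopy G C) (hFC : ↑F ⊆ C) :
    ∃ Cs : ℕ → Set U, Cs 0 = C ∧ (∀ i, IsCopy G (Cs i)) ∧
      (∀ i, Cs (i + 1) ⊂ Cs i) ∧
      (⋂ i, Cs i) = ⋂₀ {D : Set U | IsCopy G D ∧ ↑F ⊆ D} := by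
  classical
  obtain ⟨e, he⟩ := exists_surjective_nat U
  let T := {D : Set U // IsCopy G D ∧ ↑F ⊆ D}
  have step : ∀ (n : ℕ) (D : T), ∃ D' : T, D'.1 ⊂ D.1 ∧
      (e n ∉ ⋂₀ {D : Set U | IsCopy G D ∧ ↑F ⊆ D} → e n ∉ D'.1) := by
    rintro n ⟨D, hD, hFD⟩
    obtain ⟨C', h1, h2, h3, h4⟩ := step_avoid G hne F D hD hFD (e n)
    exact ⟨⟨C', h1, h2⟩, h3, h4⟩
  choose nx hnx using step
  let Cs : ℕ → T := fun n => Nat.rec ⟨C, hC, hFC⟩ nx n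
  refine ⟨fun n => (Cs n).1, rfl, fun i => (Cs i).2.1, fun i => (hnx i (Cs i)).1, ?_⟩
  apply Set.Subset.antisymm
  · intro x hx
    by_contra hcon
    obtain ⟨n, rfl⟩ := he x
    exact (hnx n (Cs n)).2 hcon (Set.mem_iInter.1 hx (n + 1))
  · intro x hx
    exact Set.mem_iInter.2 fun i => Set.mem_sInter.1 hx _ (Cs i).2
end

section
/- The set of copies for G is a Gδ subset of the power set of U with the product topology; concretely, the set {χ : U → Bool | {x ∈ U : χ(x) = true} is a copy for G} is a Gδ subset of the space U → Bool, where Bool is discrete and U → Bool carries the product topology. -/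
/-- The extension property characterizing copies. -/
def ExtProp {U : Type*} (G : Subgroup (Equiv.Perm U)) (C : Set U) : Prop :=
  ∀ g ∈ G, ∀ l : List U, (∀ x ∈ l, g x ∈ C) → ∀ u : U,
    ∃ h ∈ G, (∀ x ∈ l, h x = g x) ∧ h u ∈ C

theorem IsCopy.extProp {U : Type*} {G : Subgroup (Equiv.Perm U)} {C : Set U}
    (hC : IsCopy G C) : ExtProp G C := by
  classical
  obtain ⟨f, hf, rfl⟩ := hC
  intro g hg l hl u
  choose! e he using hl
  obtain ⟨k, hk, hkE⟩ := hf (l.toFinset.image e)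
  obtain ⟨k', hk', hkE'⟩ := hf (insert (k⁻¹ (g u)) (l.toFinset.image e))
  have h2 : ∀ x ∈ l, k⁻¹ (g x) = e x := by
    intro x hx
    rw [← he x hx, hkE (e x) (Finset.mem_image_of_mem _ (by simpa using hx))]
    simp
  refine ⟨k' * k⁻¹ * g, G.mul_mem (G.mul_mem hk' (G.inv_mem hk)) hg, ?_, ?_⟩
  · intro x hx
    simp only [Equiv.Perm.mul_apply]
    rw [h2 x hx, ← he x hx]
    exact (hkE' (e x)
      (Finset.mem_insert_of_mem (Finset.mem_image_of_mem _ (by simpa using hx)))).symm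
  · exact ⟨k⁻¹ (g u), by simpa using hkE' _ (Finset.mem_insert_self _ _)⟩

theorem ExtProp.isCopy {U : Type*} [Countable U] [Infinite U]
    {G : Subgroup (Equiv.Perm U)} {C : Set U}
    (hC : ExtProp G C) : IsCopy G C := by
  classical
  let S := {p : List U × Equiv.Perm U // p.2 ∈ G ∧ ∀ x ∈ p.1, p.2 x ∈ C}
  have step : ∀ (s : S) (u : U), ∃ s' : S, (∀ x ∈ s.1.1, x ∈ s'.1.1 ∧ s'.1.2 x = s.1.2 x) ∧
      u ∈ s'.1.1 ∧ (u ∈ C → ∃ x ∈ s'.1.1, s'.1.2 x = u) := by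
    rintro ⟨⟨l, g⟩, hg, hl⟩ u
    obtain ⟨h, hh, h1, h2⟩ := hC g hg l hl u
    have hl' : ∀ x ∈ u :: l, h x ∈ C := by
      intro x hx
      rcases List.mem_cons.1 hx with rfl | hx
      · exact h2
      · rw [h1 x hx]; exact hl x hx
    by_cases hu : u ∈ C
    · refine ⟨⟨⟨h⁻¹ u :: u :: l, h⟩, hh, ?_⟩, ?_, ?_, ?_⟩
      · intro x hx
        rcases List.mem_cons.1 hx with rfl | hx
        · simpa using hu
        · exact hl' x hx
      · intro x hx
        exact ⟨by simp [show x ∈ l from hx], h1 x hx⟩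
      · simp
      · intro _
        exact ⟨h⁻¹ u, by simp, by simp⟩
    · refine ⟨⟨⟨u :: l, h⟩, hh, hl'⟩, ?_, ?_, fun h => absurd h hu⟩
      · intro x hx
        exact ⟨by simp [show x ∈ l from hx], h1 x hx⟩
      · simp
  choose nxt hn1 hn2 hn3 using step
  obtain ⟨e, he⟩ := exists_surjective_nat U
  let s0 : S := ⟨⟨[], 1⟩, G.one_mem, by simp⟩
  let sq : ℕ → S := fun n => Nat.rec s0 (fun k s => nxt s (e k)) n
  have hsq : ∀ n, sq (n + 1) = nxt (sq n) (e n) := fun n => rfl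
  have mono : ∀ m n, m ≤ n → ∀ x ∈ (sq m).1.1,
      x ∈ (sq n).1.1 ∧ (sq n).1.2 x = (sq m).1.2 x := by
    intro m n hmn
    induction n, hmn using Nat.le_induction with
    | base => exact fun x hx => ⟨hx, rfl⟩
    | succ n _ ih =>
      intro x hx
      obtain ⟨h1, h2⟩ := ih x hx
      obtain ⟨h3, h4⟩ := hn1 (sq n) (e n) x h1
      rw [hsq]
      exact ⟨h3, h4.trans h2⟩
  have hcov : ∀ u, ∃ n, u ∈ (sq n).1.1 := by
    intro u
    obtain ⟨n, rfl⟩ := he u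
    exact ⟨n + 1, hn2 (sq n) (e n)⟩
  choose N hN using hcov
  let f : U → U := fun u => (sq (N u)).1.2 u
  have hf : ∀ n x, x ∈ (sq n).1.1 → f x = (sq n).1.2 x := by
    intro n x hx
    rcases le_total n (N x) with h | h
    · exact (mono _ _ h x hx).2
    · exact (mono _ _ h x (hN x)).2.symm
  refine ⟨f, ?_, ?_⟩
  · intro F
    refine ⟨(sq (F.sup N)).1.2, (sq (F.sup N)).2.1, fun x hx => ?_⟩
    exact hf _ x (mono _ _ (Finset.le_sup hx) x (hN x)).1
  · ext c
    constructor
    · rintro ⟨x, rfl⟩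
      exact (sq (N x)).2.2 x (hN x)
    · intro hc
      obtain ⟨n, rfl⟩ := he c
      obtain ⟨x, hx, hx'⟩ := hn3 (sq n) (e n) hc
      exact ⟨x, (hf (n + 1) x hx).trans hx'⟩

/-- Theorem: the set of copies for `G` is a Gδ subset of the powerset of `U`, identified
with the product space `U → Bool` (with `Bool` discrete). -/
theorem isGδ_copies {U : Type*} [Countable U] [Infinite U]
    (G : Subgroup (Equiv.Perm U)) :
    IsGδ {χ : U → Bool | IsCopy G {x : U | χ x = true}} := by
  have key : {χ : U → Bool | IsCopy G {x : U | χ x = true}} =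
      ⋂ p : List U × List U × U, {χ : U → Bool | (∃ g ∈ G, p.1.map g = p.2.1) →
        (∃ y ∈ p.2.1, χ y = false) ∨ ∃ h ∈ G, p.1.map h = p.2.1 ∧ χ (h p.2.2) = true} := by
    ext χ
    simp only [Set.mem_ofPred_eq, Set.mem_iInter]
    constructor
    · rintro hc ⟨l, m, u⟩ ⟨g, hg, hm⟩
      dsimp only at hm ⊢
      subst hm
      by_cases hl : ∀ x ∈ l, χ (g x) = true
      · obtain ⟨h, hh, h1, h2⟩ := hc.extProp g hg l hl u
        exact Or.inr ⟨h, hh, List.map_congr_left h1, h2⟩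
      · push Not at hl
        obtain ⟨x, hx, hx'⟩ := hl
        exact Or.inl ⟨g x, List.mem_map_of_mem hx, by simpa using hx'⟩
    · intro H
      apply ExtProp.isCopy
      intro g hg l hl u
      rcases H (l, l.map g, u) ⟨g, hg, rfl⟩ with ⟨y, hy, hy'⟩ | ⟨h, hh, h1, h2⟩
      · obtain ⟨x, hx, rfl⟩ := List.mem_map.1 hy
        have := hl x hx
        simp only [Set.mem_ofPred_eq] at this
        simp [this] at hy'
      · exact ⟨h, hh, fun x hx => List.map_inj_left.1 h1 x hx, h2⟩
  rw [key]
  refine IsGδ.iInter fun p => IsOpen.isGδ ?_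
  have hop : ∀ (y : U) (b : Bool), IsOpen {χ : U → Bool | χ y = b} := by
    intro y b
    have h : IsOpen ((fun χ : U → Bool => χ y) ⁻¹' {b}) :=
      (continuous_apply y).isOpen_preimage _ (isOpen_discrete _)
    convert h using 1
    ext χ
    simp
  by_cases hp : ∃ g ∈ G, p.1.map g = p.2.1
  · have : {χ : U → Bool | (∃ g ∈ G, p.1.map g = p.2.1) →
        (∃ y ∈ p.2.1, χ y = false) ∨ ∃ h ∈ G, p.1.map h = p.2.1 ∧ χ (h p.2.2) = true} =
        (⋃ y ∈ p.2.1, {χ : U → Bool | χ y = false}) ∪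
        ⋃ h ∈ G, ⋃ _ : p.1.map h = p.2.1, {χ : U → Bool | χ (h p.2.2) = true} := by
      ext χ
      simp only [Set.mem_ofPred_eq, Set.mem_union, Set.mem_iUnion, exists_prop]
      exact ⟨fun h => h hp, fun h _ => h⟩
    rw [this]
    exact (isOpen_biUnion fun y _ => hop y false).union
      (isOpen_biUnion fun h _ => isOpen_iUnion fun _ => hop _ true)
  · simp [hp]
end
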